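/- Let $2<p<\infty$ and $1\le q\le p$. Let $(\beta_k)_{k\in\mathbb{Z}}$ be a family of functions in $L^1(\mathbb{R}^d)$ with $\sup_k \|\beta_k\|_{L^1}\le A$ and $\sup_{\xi}\sum_{k\in\mathbb{Z}}|\widehat{\beta_k}(\xi)|\le B$. Then for every $f$, $\big(\sum_k \|\beta_k * f\|_{L^{p,q}}^p\big)^{1/p} \le C(p,q,A,B)\, \|f\|_{L^{p,q}}$. -/

import Mathlib

/-!
Fix a height `s` and split `f` at a height `τ` comparable to `s / A`. Convolving the low part with
`β_k` gives at most `A τ ≤ s / 2` pointwise, so only the high part contributes to the set where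
`|β_k * f| > s`. The high part is integrable and, by Plancherel and `∑ |β̂_k|² ≤ B²`, the squared
`L²` norms of its convolutions sum to at most `B²` times its own; Chebyshev's inequality then bounds
`s² ∑_k |{|β_k * f| > s}|` by a multiple of `∫_{|f| > τ} |f|²`. At dyadic heights this is a tail sum
over the distribution of `f`, which a discrete Hardy inequality absorbs: the weight has exponent
`q - 2q/p`, positive because `p > 2`. The sum over `k` is taken at the level of the distribution
functions, and Minkowski's inequality in `ℓ^{p/q}`, valid as `q ≤ p`, compares this with
`ℓ^p(L^{p,q})`.
-/

open MeasureTheory ENNReal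
open scoped FourierTransform Convolution

/-- A dyadic version of the Lorentz space quasi-norm `‖f‖_{L^{p,q}(μ)}` (here `q < ∞`). -/
noncomputable def lorentzNorm {α : Type*} [MeasurableSpace α] (μ : Measure α)
    (p q : ℝ) {E : Type*} [NormedAddCommGroup E] (f : α → E) : ℝ≥0∞ :=
  (∑' m : ℤ, ((2 : ℝ≥0∞) ^ m) ^ q *
    (μ {x | (2 : ℝ) ^ m < ‖f x‖}) ^ (q / p)) ^ (1 / q)

section ENNRealSeries

variable {ι κ : Type*}

theorem tsum_sq_le_sq_tsum (a : ι → ℝ≥0∞) : ∑' i, a i ^ 2 ≤ (∑' i, a i) ^ 2 := by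
  simp only [sq, ← ENNReal.tsum_mul_right]
  gcongr with i
  exact ENNReal.le_tsum i

theorem rpow_tsum_le_tsum_rpow (a : ι → ℝ≥0∞) {s : ℝ} (hs : 0 < s) (hs1 : s ≤ 1) :
    (∑' i, a i) ^ s ≤ ∑' i, a i ^ s := by
  have hlim := ((ENNReal.continuous_rpow_const (y := s)).tendsto _).comp
    (ENNReal.summable (f := a)).hasSum
  refine le_of_tendsto' hlim fun t ↦ ?_
  calc (∑ i ∈ t, a i) ^ s ≤ ∑ i ∈ t, a i ^ s :=
        Finset.le_sum_of_subadditive (fun x : ℝ≥0∞ ↦ x ^ s) (ENNReal.zero_rpow_of_pos hs).le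
          (fun x y ↦ ENNReal.rpow_add_le_add_rpow x y hs.le hs1) t a
    _ ≤ ∑' i, a i ^ s := ENNReal.sum_le_tsum t

theorem Lp_finsetSum_le (K : Finset κ) (t : Finset ι) (G : ι → κ → ℝ≥0∞) {r : ℝ} (hr : 1 ≤ r) :
    (∑ k ∈ K, (∑ m ∈ t, G m k) ^ r) ^ (1 / r) ≤ ∑ m ∈ t, (∑ k ∈ K, G m k ^ r) ^ (1 / r) := by
  have hr0 : 0 < r := by linarith
  have h := Finset.le_sum_of_subadditive
    (fun g : κ → ℝ≥0∞ ↦ (∑ k ∈ K, g k ^ r) ^ (1 / r))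
    (by simp [ENNReal.zero_rpow_of_pos hr0, hr0]) (fun f g ↦ ENNReal.Lp_add_le K f g hr) t G
  simpa only [Finset.sum_apply] using h

theorem Lp_tsum_le (G : ι → κ → ℝ≥0∞) {r : ℝ} (hr : 1 ≤ r) :
    (∑' k, (∑' m, G m k) ^ r) ^ (1 / r) ≤ ∑' m, (∑' k, G m k ^ r) ^ (1 / r) := by
  have hr0 : 0 < r := by linarith
  rw [one_div, ENNReal.rpow_inv_le_iff hr0, ENNReal.tsum_eq_iSup_sum]
  refine iSup_le fun K ↦ ?_
  have hlim : Filter.Tendsto (fun t : Finset ι ↦ ∑ k ∈ K, (∑ m ∈ t, G m k) ^ r) Filter.atTop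
      (nhds (∑ k ∈ K, (∑' m, G m k) ^ r)) :=
    tendsto_finsetSum _ fun k _ ↦ ((ENNReal.continuous_rpow_const (y := r)).tendsto _).comp
      (ENNReal.summable (f := fun m ↦ G m k)).hasSum
  refine le_of_tendsto' hlim fun t ↦ ?_
  rw [← ENNReal.rpow_inv_le_iff hr0, ← one_div]
  calc (∑ k ∈ K, (∑ m ∈ t, G m k) ^ r) ^ (1 / r)
      ≤ ∑ m ∈ t, (∑ k ∈ K, G m k ^ r) ^ (1 / r) := Lp_finsetSum_le K t G hr
    _ ≤ ∑ m ∈ t, (∑' k, G m k ^ r) ^ (1 / r) := by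
        gcongr
        exact ENNReal.sum_le_tsum K
    _ ≤ ∑' m, (∑' k, G m k ^ r) ^ (1 / r) := ENNReal.sum_le_tsum t

theorem tsum_lintegral_le_lintegral_tsum {α : Type*} [MeasurableSpace α] {μ : Measure α}
    {f : ι → α → ℝ≥0∞} (hf : ∀ i, AEMeasurable (f i) μ) :
    ∑' i, ∫⁻ x, f i x ∂μ ≤ ∫⁻ x, ∑' i, f i x ∂μ := by
  rw [ENNReal.tsum_eq_iSup_sum]
  refine iSup_le fun t ↦ ?_
  rw [← lintegral_finsetSum' t fun i _ ↦ hf i]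
  exact lintegral_mono fun x ↦ ENNReal.sum_le_tsum t

end ENNRealSeries

section DyadicSequences

theorem ofReal_two_zpow (m : ℤ) : ENNReal.ofReal ((2 : ℝ) ^ m) = 2 ^ m := by
  rw [← Real.rpow_intCast, ← ENNReal.ofReal_rpow_of_pos two_pos, ENNReal.rpow_intCast,
    ENNReal.ofReal_ofNat]

theorem two_zpow_add (m n : ℤ) : (2 : ℝ≥0∞) ^ (m + n) = 2 ^ m * 2 ^ n :=
  ENNReal.zpow_add two_ne_zero ofNat_ne_top m n

theorem two_zpow_rpow_mul_rpow (m : ℤ) (a : ℝ≥0∞) (q r : ℝ) {σ : ℝ} (hσ : 0 ≤ σ) :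
    ((2 : ℝ≥0∞) ^ m) ^ q * a ^ σ = (2 ^ m) ^ (q - r * σ) * ((2 ^ m) ^ r * a) ^ σ := by
  have h0 : (2 : ℝ≥0∞) ^ m ≠ 0 := (ENNReal.zpow_pos two_ne_zero ofNat_ne_top m).ne'
  have htop : (2 : ℝ≥0∞) ^ m ≠ ∞ := ENNReal.zpow_ne_top two_ne_zero ofNat_ne_top m
  rw [ENNReal.mul_rpow_of_nonneg _ _ hσ, ← ENNReal.rpow_mul, ← mul_assoc,
    ← ENNReal.rpow_add _ _ h0 htop, sub_add_cancel]

theorem tsum_two_zpow_rpow_mul_shift (a : ℤ → ℝ≥0∞) (s : ℝ) (j : ℤ) :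
    ∑' m : ℤ, ((2 : ℝ≥0∞) ^ m) ^ s * a (m + j) =
      ((2 : ℝ≥0∞) ^ (-j)) ^ s * ∑' m : ℤ, ((2 : ℝ≥0∞) ^ m) ^ s * a m := by
  rw [← (Equiv.addRight (-j)).tsum_eq, ← ENNReal.tsum_mul_left]
  refine tsum_congr fun m ↦ ?_
  simp only [Equiv.coe_addRight, neg_add_cancel_right]
  rw [add_comm m, two_zpow_add,
    ENNReal.mul_rpow_of_ne_top (ENNReal.zpow_ne_top two_ne_zero ofNat_ne_top _)
      (ENNReal.zpow_ne_top two_ne_zero ofNat_ne_top _), mul_assoc]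

/-- The norm of the tail-sum operator `a ↦ (m ↦ ∑_{i ≥ 0} a (m - n + i))` on the weighted space
`ℓ¹(ℤ, 2^{ms})`. -/
noncomputable def dyadicTailConst (n : ℤ) (s : ℝ) : ℝ≥0∞ :=
  ∑' i : ℕ, ((2 : ℝ≥0∞) ^ (-(i - n) : ℤ)) ^ s

theorem dyadicTailConst_ne_top (n : ℤ) {s : ℝ} (hs : 0 < s) : dyadicTailConst n s ≠ ∞ := by
  have hterm (i : ℕ) : ((2 : ℝ≥0∞) ^ (-(i - n) : ℤ)) ^ s = 2 ^ (n * s) * (2 ^ (-s)) ^ i := by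
    simp only [← ENNReal.rpow_natCast, ← ENNReal.rpow_intCast, ← ENNReal.rpow_mul]
    rw [← ENNReal.rpow_add _ _ two_ne_zero ofNat_ne_top]
    congr 1
    push_cast
    ring
  have hratio : (2 : ℝ≥0∞) ^ (-s) < 1 :=
    ENNReal.rpow_lt_one_of_one_lt_of_neg one_lt_two (neg_lt_zero.2 hs)
  rw [dyadicTailConst, tsum_congr hterm, ENNReal.tsum_mul_left, ENNReal.tsum_geometric]
  exact ENNReal.mul_ne_top (ENNReal.rpow_ne_top_of_ne_zero two_ne_zero ofNat_ne_top)
    (ENNReal.inv_ne_top.2 (tsub_pos_of_lt hratio).ne')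

theorem tsum_two_zpow_rpow_mul_tail (a : ℤ → ℝ≥0∞) (n : ℤ) (s : ℝ) :
    ∑' m : ℤ, ((2 : ℝ≥0∞) ^ m) ^ s * ∑' i : ℕ, a (m + (i - n)) =
      dyadicTailConst n s * ∑' m : ℤ, ((2 : ℝ≥0∞) ^ m) ^ s * a m := by
  rw [dyadicTailConst, ← ENNReal.tsum_mul_right]
  simp_rw [← tsum_two_zpow_rpow_mul_shift a s, ← ENNReal.tsum_mul_left]
  exact ENNReal.tsum_comm

/-- The dyadic Lorentz quasi-norm of a function, as a functional of the measures `ν m` of its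
superlevel sets at the heights `2 ^ m`. It also applies to a sum of such sequences, which is the
distribution of a family of functions regarded as a single function on a disjoint union. -/
noncomputable def dyadicLorentzNorm (p q : ℝ) (ν : ℤ → ℝ≥0∞) : ℝ≥0∞ :=
  (∑' m : ℤ, ((2 : ℝ≥0∞) ^ m) ^ q * ν m ^ (q / p)) ^ (1 / q)

theorem tsum_dyadicLorentzNorm_rpow_le {ι : Type*} {p q : ℝ} (hq : 0 < q) (hqp : q ≤ p)
    (ν : ι → ℤ → ℝ≥0∞) :
    (∑' k, dyadicLorentzNorm p q (ν k) ^ p) ^ (1 / p) ≤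
      dyadicLorentzNorm p q fun m ↦ ∑' k, ν k m := by
  have hp : 0 < p := hq.trans_le hqp
  have hr : 1 ≤ p / q := (one_le_div hq).2 hqp
  have hweight (m : ℤ) : (∑' k, (((2 : ℝ≥0∞) ^ m) ^ q * ν k m ^ (q / p)) ^ (p / q)) ^ (1 / (p / q))
      = (2 ^ m) ^ q * (∑' k, ν k m) ^ (q / p) := by
    have hqr : q / p * (p / q) = 1 := by field_simp
    simp only [ENNReal.mul_rpow_of_nonneg _ _ (zero_le_one.trans hr), ENNReal.tsum_mul_left,
      ENNReal.mul_rpow_of_nonneg _ _ (one_div_nonneg.2 (zero_le_one.trans hr)),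
      ← ENNReal.rpow_mul, hqr, ENNReal.rpow_one]
    congr 2 <;> field_simp
  calc (∑' k, dyadicLorentzNorm p q (ν k) ^ p) ^ (1 / p)
      = ((∑' k, (∑' m : ℤ, ((2 : ℝ≥0∞) ^ m) ^ q * ν k m ^ (q / p)) ^ (p / q)) ^ (1 / (p / q)))
          ^ (1 / q) := by
        simp only [dyadicLorentzNorm, ← ENNReal.rpow_mul]
        congr 1
        · simp only [one_div_mul_eq_div]
        · field_simp
    _ ≤ (∑' m : ℤ, (∑' k, (((2 : ℝ≥0∞) ^ m) ^ q * ν k m ^ (q / p)) ^ (p / q)) ^ (1 / (p / q)))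
          ^ (1 / q) := by
        gcongr
        exact Lp_tsum_le _ hr
    _ = dyadicLorentzNorm p q fun m ↦ ∑' k, ν k m := by simp only [hweight, dyadicLorentzNorm]

theorem dyadicLorentzNorm_le_of_le_tail {lam ν : ℤ → ℝ≥0∞} {D : ℝ≥0∞} {n : ℤ} {p q r : ℝ}
    (hq : 0 < q) (hqp : q ≤ p)
    (h : ∀ m, ((2 : ℝ≥0∞) ^ m) ^ r * lam m ≤
      D * ∑' i : ℕ, ((2 : ℝ≥0∞) ^ (m + (i - n))) ^ r * ν (m + (i - n))) :
    dyadicLorentzNorm p q lam ≤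
      (D ^ (q / p) * dyadicTailConst n (q - r * (q / p))) ^ (1 / q) *
        dyadicLorentzNorm p q ν := by
  have hp : 0 < p := hq.trans_le hqp
  have hσ : 0 < q / p := div_pos hq hp
  have hσ1 : q / p ≤ 1 := (div_le_one hp).2 hqp
  set s := q - r * (q / p)
  have htail (m : ℤ) : (((2 : ℝ≥0∞) ^ m) ^ r * lam m) ^ (q / p) ≤
      D ^ (q / p) * ∑' i : ℕ, ((2 ^ (m + (i - n))) ^ r * ν (m + (i - n))) ^ (q / p) := by
    refine (ENNReal.rpow_le_rpow (h m) hσ.le).trans ?_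
    rw [ENNReal.mul_rpow_of_nonneg _ _ hσ.le]
    gcongr
    exact rpow_tsum_le_tsum_rpow _ hσ hσ1
  rw [dyadicLorentzNorm, dyadicLorentzNorm, ← ENNReal.mul_rpow_of_nonneg _ _ (by positivity)]
  gcongr
  calc ∑' m : ℤ, ((2 : ℝ≥0∞) ^ m) ^ q * lam m ^ (q / p)
      = ∑' m : ℤ, ((2 : ℝ≥0∞) ^ m) ^ s * ((2 ^ m) ^ r * lam m) ^ (q / p) :=
        tsum_congr fun m ↦ two_zpow_rpow_mul_rpow m _ q r hσ.le
    _ ≤ ∑' m : ℤ, ((2 : ℝ≥0∞) ^ m) ^ s *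
          (D ^ (q / p) * ∑' i : ℕ, ((2 ^ (m + (i - n))) ^ r * ν (m + (i - n))) ^ (q / p)) := by
        gcongr with m
        exact htail m
    _ = D ^ (q / p) * (dyadicTailConst n s *
          ∑' m : ℤ, ((2 : ℝ≥0∞) ^ m) ^ s * ((2 ^ m) ^ r * ν m) ^ (q / p)) := by
        simp only [mul_left_comm _ (D ^ (q / p)), ENNReal.tsum_mul_left]
        rw [tsum_two_zpow_rpow_mul_tail fun m ↦ ((2 ^ m) ^ r * ν m) ^ (q / p)]
    _ = D ^ (q / p) * dyadicTailConst n s *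
          ∑' m : ℤ, ((2 : ℝ≥0∞) ^ m) ^ q * ν m ^ (q / p) := by
        rw [mul_assoc]
        simp only [two_zpow_rpow_mul_rpow _ _ q r hσ.le, s]

end DyadicSequences

section Interpolation

variable {α E : Type*} [NormedAddCommGroup E]

theorem enorm_rpow_le_tsum_indicator {r : ℝ} (hr : 0 ≤ r) (f : α → E) {M : ℤ} {x : α}
    (hx : (2 : ℝ) ^ M < ‖f x‖) :
    ‖f x‖ₑ ^ r ≤ ∑' i : ℕ, {y | (2 : ℝ) ^ (M + i) < ‖f y‖}.indicator
      (fun _ ↦ 2 ^ r * ((2 : ℝ≥0∞) ^ (M + i)) ^ r) x := by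
  obtain ⟨j, hjlt, hjle⟩ := exists_mem_Ioc_zpow ((by positivity : (0 : ℝ) < 2 ^ M).trans hx)
    (_root_.one_lt_two (α := ℝ))
  have hMj : M < j + 1 :=
    (zpow_lt_zpow_iff_right₀ (_root_.one_lt_two (α := ℝ))).1 (hx.trans_le hjle)
  obtain ⟨i, rfl⟩ := Int.le.dest (Int.lt_add_one_iff.1 hMj)
  have hle : ‖f x‖ₑ ≤ 2 * 2 ^ (M + i) := by
    calc ‖f x‖ₑ ≤ ENNReal.ofReal (2 ^ (M + i + 1)) := by
          rw [← ofReal_norm]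
          exact ENNReal.ofReal_le_ofReal hjle
      _ = 2 * 2 ^ (M + i) := by rw [ofReal_two_zpow, two_zpow_add, zpow_one, mul_comm]
  have hxi : x ∈ {y | (2 : ℝ) ^ (M + i) < ‖f y‖} := hjlt
  calc ‖f x‖ₑ ^ r ≤ 2 ^ r * ((2 : ℝ≥0∞) ^ (M + i)) ^ r := by
        rw [← ENNReal.mul_rpow_of_nonneg _ _ hr]
        gcongr
    _ = {y | (2 : ℝ) ^ (M + i) < ‖f y‖}.indicator
          (fun _ ↦ 2 ^ r * ((2 : ℝ≥0∞) ^ (M + i)) ^ r) x :=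
        (Set.indicator_of_mem hxi fun _ ↦ _).symm
    _ ≤ _ := ENNReal.le_tsum i

variable [MeasurableSpace α] {μ : Measure α}

/-- The distribution function `s ↦ |{‖f‖ > s}|` of `f`. -/
noncomputable def distribution (μ : Measure α) (f : α → E) (s : ℝ) : ℝ≥0∞ :=
  μ {x | s < ‖f x‖}

theorem lorentzNorm_eq_dyadicLorentzNorm (p q : ℝ) (f : α → E) :
    lorentzNorm μ p q f = dyadicLorentzNorm p q fun m ↦ distribution μ f (2 ^ m) :=
  rfl

theorem nullMeasurableSet_lt_norm {f : α → E} (hf : AEStronglyMeasurable f μ) (s : ℝ) :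
    NullMeasurableSet {x | s < ‖f x‖} μ :=
  nullMeasurableSet_lt aemeasurable_const hf.norm.aemeasurable

theorem setLIntegral_enorm_rpow_le_tsum_distribution {r : ℝ} (hr : 0 ≤ r) {f : α → E}
    (hf : AEStronglyMeasurable f μ) (M : ℤ) :
    ∫⁻ x in {x | (2 : ℝ) ^ M < ‖f x‖}, ‖f x‖ₑ ^ r ∂μ ≤
      2 ^ r * ∑' i : ℕ, ((2 : ℝ≥0∞) ^ (M + i)) ^ r * distribution μ f (2 ^ (M + i)) := by
  have hlayer (i : ℕ) : AEMeasurable ({y | (2 : ℝ) ^ (M + i) < ‖f y‖}.indicator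
      fun _ ↦ 2 ^ r * ((2 : ℝ≥0∞) ^ (M + i)) ^ r) μ :=
    aemeasurable_const.indicator₀ (nullMeasurableSet_lt_norm hf _)
  rw [← lintegral_indicator₀ (nullMeasurableSet_lt_norm hf _)]
  calc ∫⁻ x, {x | (2 : ℝ) ^ M < ‖f x‖}.indicator (fun x ↦ ‖f x‖ₑ ^ r) x ∂μ
      ≤ ∫⁻ x, ∑' i : ℕ, {y | (2 : ℝ) ^ (M + i) < ‖f y‖}.indicator
          (fun _ ↦ 2 ^ r * ((2 : ℝ≥0∞) ^ (M + i)) ^ r) x ∂μ :=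
        lintegral_mono fun x ↦ Set.indicator_apply_le' (enorm_rpow_le_tsum_indicator hr f)
          fun _ ↦ zero_le
    _ = _ := by
        rw [lintegral_tsum hlayer, ← ENNReal.tsum_mul_left]
        refine tsum_congr fun i ↦ ?_
        rw [lintegral_indicator_const₀ (nullMeasurableSet_lt_norm hf _), mul_assoc, distribution]

theorem tsum_lorentzNorm_rpow_le_of_distribution_le {ι β G : Type*} [MeasurableSpace β]
    {ρ : Measure β} [NormedAddCommGroup G] {F : ι → β → G} {f : α → E} {D : ℝ≥0∞} {n : ℤ}
    {p q r : ℝ} (hq : 0 < q) (hqp : q ≤ p) (hr : 0 ≤ r) (hf : AEStronglyMeasurable f μ)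
    (h : ∀ m : ℤ, ((2 : ℝ≥0∞) ^ m) ^ r * ∑' k, distribution ρ (F k) (2 ^ m) ≤
      D * ∫⁻ x in {x | (2 : ℝ) ^ (m - n) < ‖f x‖}, ‖f x‖ₑ ^ r ∂μ) :
    (∑' k, lorentzNorm ρ p q (F k) ^ p) ^ (1 / p) ≤
      ((D * 2 ^ r) ^ (q / p) * dyadicTailConst n (q - r * (q / p))) ^ (1 / q) *
        lorentzNorm μ p q f := by
  simp only [lorentzNorm_eq_dyadicLorentzNorm]
  refine (tsum_dyadicLorentzNorm_rpow_le hq hqp _).trans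
    (dyadicLorentzNorm_le_of_le_tail hq hqp fun m ↦ (h m).trans ?_)
  rw [mul_assoc]
  gcongr
  refine (setLIntegral_enorm_rpow_le_tsum_distribution hr hf (m - n)).trans_eq ?_
  simp only [sub_add_eq_add_sub, add_sub_assoc]

end Interpolation

theorem lintegral_enorm_sq_eq_eLpNorm_sq {α E : Type*} [MeasurableSpace α] [NormedAddCommGroup E]
    (μ : Measure α) (f : α → E) : ∫⁻ x, ‖f x‖ₑ ^ 2 ∂μ = eLpNorm f 2 μ ^ 2 := by
  simpa using (eLpNorm_nnreal_pow_eq_lintegral (f := f) (μ := μ) (p := 2) two_ne_zero).symm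

section Plancherel

open SchwartzMap

variable {E F : Type*} [NormedAddCommGroup E] [InnerProductSpace ℝ E] [FiniteDimensional ℝ E]
  [MeasurableSpace E] [BorelSpace E] [NormedAddCommGroup F]

theorem ae_eq_of_integral_schwartz_smul_eq [NormedSpace ℂ F] [CompleteSpace F] {u v : E → F}
    (hu : LocallyIntegrable u) (hv : LocallyIntegrable v)
    (h : ∀ φ : 𝓢(E, ℂ), ∫ x, φ x • u x = ∫ x, φ x • v x) : u =ᵐ[volume] v := by
  refine ae_eq_of_integral_contDiff_smul_eq hu hv fun g hg hgc ↦ ?_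
  have hc : HasCompactSupport (fun x ↦ (g x : ℂ)) := hgc.comp_left (g := ((↑) : ℝ → ℂ)) rfl
  have hs : ContDiff ℝ ((⊤ : ℕ∞) : WithTop ℕ∞) (fun x ↦ (g x : ℂ)) :=
    Complex.ofRealCLM.contDiff.comp hg
  simpa using h (hc.toSchwartzMap hs)

theorem continuous_fourier_of_integrable [NormedSpace ℂ F] {h : E → F} (hh : Integrable h) :
    Continuous (𝓕 h) :=
  VectorFourier.fourierIntegral_continuous Real.continuous_fourierChar
    (innerSL ℝ).continuous₂ hh

theorem integral_schwartz_fourier_smul_eq [NormedSpace ℂ F] [CompleteSpace F] {h : E → F}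
    (hh : Integrable h) (φ : 𝓢(E, ℂ)) : ∫ x, 𝓕 φ x • h x = ∫ x, φ x • 𝓕 h x := by
  simpa using! VectorFourier.integral_fourierIntegral_smul_eq_flip (L := innerₗ E)
    Real.continuous_fourierChar continuous_inner φ.integrable hh

variable [InnerProductSpace ℂ F] [CompleteSpace F]

theorem integral_schwartz_smul_fourier_Lp (v : Lp (α := E) F 2) (φ : 𝓢(E, ℂ)) :
    ∫ x, φ x • (𝓕 v : Lp (α := E) F 2) x = ∫ x, 𝓕 φ x • v x := by
  have h := congrArg (fun T ↦ T φ) (Lp.fourier_toTemperedDistribution_eq v)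
  simpa [Lp.toTemperedDistribution_apply] using h.symm

theorem fourier_Lp_ae_eq_fourier_iff {h : E → F} (hh : Integrable h) (v : Lp (α := E) F 2) :
    (𝓕 v : Lp (α := E) F 2) =ᵐ[volume] 𝓕 h ↔ v =ᵐ[volume] h := by
  have hloc (w : Lp (α := E) F 2) : LocallyIntegrable w volume :=
    (Lp.memLp w).locallyIntegrable (by norm_num)
  constructor <;> intro hae
  · refine ae_eq_of_integral_schwartz_smul_eq (hloc v) hh.locallyIntegrable fun φ ↦ ?_
    have hφ : 𝓕 (𝓕⁻ φ) = φ := FourierTransform.fourier_fourierInv_eq φ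
    rw [← hφ, ← integral_schwartz_smul_fourier_Lp,
      integral_schwartz_fourier_smul_eq hh]
    exact integral_congr_ae (hae.mono fun x hx ↦ congrArg (_ • ·) hx)
  · refine ae_eq_of_integral_schwartz_smul_eq (hloc _)
      (continuous_fourier_of_integrable hh).locallyIntegrable fun φ ↦ ?_
    rw [integral_schwartz_smul_fourier_Lp, ← integral_schwartz_fourier_smul_eq hh]
    exact integral_congr_ae (hae.mono fun x hx ↦ congrArg (_ • ·) hx)

theorem eLpNorm_fourier_eq {h : E → F} (hh : Integrable h) : eLpNorm (𝓕 h) 2 = eLpNorm h 2 := by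
  have of_Lp (v : Lp (α := E) F 2) (hv : v =ᵐ[volume] h) : eLpNorm (𝓕 h) 2 = eLpNorm h 2 := by
    rw [← eLpNorm_congr_ae ((fourier_Lp_ae_eq_fourier_iff hh v).2 hv), ← eLpNorm_congr_ae hv,
      ← Lp.enorm_def, ← Lp.enorm_def, ← ofReal_norm, ← ofReal_norm, Lp.norm_fourier_eq]
  by_cases h2 : MemLp h 2
  · exact of_Lp h2.toLp h2.coeFn_toLp
  by_cases hF2 : MemLp (𝓕 h) 2
  · have hinv : 𝓕 (𝓕⁻ (hF2.toLp (𝓕 h))) = hF2.toLp (𝓕 h) :=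
      FourierTransform.fourier_fourierInv_eq _
    refine of_Lp _ ((fourier_Lp_ae_eq_fourier_iff hh (𝓕⁻ (hF2.toLp (𝓕 h)))).1 ?_)
    rw [hinv]
    exact hF2.coeFn_toLp
  · have eq_top {u : E → F} (hu : AEStronglyMeasurable u volume) (hu2 : ¬MemLp u 2 volume) :
        eLpNorm u 2 volume = ∞ := not_lt_top_iff.1 fun hlt ↦ hu2 ⟨hu, hlt⟩
    rw [eq_top hh.1 h2, eq_top (continuous_fourier_of_integrable hh).aestronglyMeasurable hF2]

theorem lintegral_enorm_fourier_sq {h : E → F} (hh : Integrable h) :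
    ∫⁻ ξ, ‖𝓕 h ξ‖ₑ ^ 2 = ∫⁻ x, ‖h x‖ₑ ^ 2 := by
  rw [lintegral_enorm_sq_eq_eLpNorm_sq, lintegral_enorm_sq_eq_eLpNorm_sq, eLpNorm_fourier_eq hh]

end Plancherel

section Convolution

variable {𝕜 G F₁ F₂ F₃ : Type*} [MeasurableSpace G] {μ : Measure G} [NontriviallyNormedField 𝕜]
  [NormedAddCommGroup F₁] [NormedSpace 𝕜 F₁] [NormedAddCommGroup F₂] [NormedSpace 𝕜 F₂]
  [NormedAddCommGroup F₃] [NormedSpace 𝕜 F₃] [NormedSpace ℝ F₃] (L : F₁ →L[𝕜] F₂ →L[𝕜] F₃)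

theorem norm_convolution_le [Sub G] {β : G → F₁} {l : G → F₂} (hβ : Integrable β μ) {τ : ℝ}
    (hl : ∀ x, ‖l x‖ ≤ τ) (x : G) : ‖(β ⋆[L, μ] l) x‖ ≤ ‖L‖ * (∫ y, ‖β y‖ ∂μ) * τ := by
  rw [convolution_def, ← integral_const_mul, ← integral_mul_const]
  refine norm_integral_le_of_norm_le ((hβ.norm.const_mul ‖L‖).mul_const τ) (.of_forall fun y ↦ ?_)
  exact (L.le_opNorm₂ _ _).trans (by gcongr; exact hl _)

variable [AddCommGroup G] [MeasurableAdd₂ G] [MeasurableNeg G] [SFinite μ] [μ.IsAddLeftInvariant]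

theorem distribution_convolution_add_le {β : G → F₁} {l g : G → F₂} (hβ : Integrable β μ)
    (hlm : AEStronglyMeasurable l μ) {s t τ : ℝ} (hl : ∀ x, ‖l x‖ ≤ τ)
    (hs : ‖L‖ * (∫ x, ‖β x‖ ∂μ) * τ ≤ s) (hg : Integrable g μ) :
    distribution μ (β ⋆[L, μ] (l + g)) (s + t) ≤ distribution μ (β ⋆[L, μ] g) t := by
  refine measure_mono_ae ?_
  filter_upwards [hβ.ae_convolution_exists L hg] with x hgx hlt
  have hlx : ConvolutionExistsAt β l x L μ := by
    refine BddAbove.convolutionExistsAt L ⟨τ, ?_⟩ MeasurableSet.univ (Set.subset_univ _)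
      hβ.integrableOn hlm
    rintro _ ⟨y, -, rfl⟩
    exact hl y
  have hadd : ‖(β ⋆[L, μ] (l + g)) x‖ ≤ s + ‖(β ⋆[L, μ] g) x‖ := by
    rw [hlx.distrib_add hgx]
    exact norm_add_le_of_le ((norm_convolution_le L hβ hl x).trans hs) le_rfl
  exact lt_of_add_lt_add_left (lt_of_lt_of_le hlt hadd)

end Convolution

section HeightTruncation

variable {α E : Type*} [NormedAddCommGroup E]

theorem norm_indicator_compl_lt_norm_le (f : α → E) {τ : ℝ} (hτ : 0 ≤ τ) (x : α) :
    ‖{y | τ < ‖f y‖}ᶜ.indicator f x‖ ≤ τ := by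
  by_cases hx : τ < ‖f x‖
  · simpa [hx] using hτ
  · simpa [hx] using not_lt.1 hx

variable [MeasurableSpace α] {μ : Measure α}

theorem ofReal_pow_mul_distribution_le {f : α → E} (hf : AEStronglyMeasurable f μ) (s : ℝ)
    (n : ℕ) : ENNReal.ofReal s ^ n * distribution μ f s ≤ ∫⁻ x, ‖f x‖ₑ ^ n ∂μ := by
  refine le_trans ?_ (mul_meas_ge_le_lintegral₀ (hf.enorm.pow_const n) (ENNReal.ofReal s ^ n))
  rw [distribution]
  gcongr with x
  intro hx
  rw [← ofReal_norm]
  gcongr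

theorem integrableOn_lt_norm_of_memLp {f : α → E} {r : ℝ≥0∞} (hr : 1 ≤ r) (hr' : r ≠ ∞) {τ : ℝ}
    (hτ : 0 < τ) (hf : MemLp f r (μ.restrict {x | τ < ‖f x‖})) :
    IntegrableOn f {x | τ < ‖f x‖} μ := by
  have hfin : μ {x | τ < ‖f x‖} < ∞ := by
    rw [← Measure.restrict_apply_self]
    refine (measure_mono fun x hx ↦ ?_).trans_lt
      (hf.meas_ge_lt_top' (zero_lt_one.trans_le hr).ne' hr' (ENNReal.ofReal_pos.2 hτ).ne')
    exact (ENNReal.ofReal_le_ofReal (le_of_lt hx)).trans_eq (ofReal_norm _)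
  have : IsFiniteMeasure (μ.restrict {x | τ < ‖f x‖}) := isFiniteMeasure_restrict.2 hfin.ne
  exact hf.integrable hr

end HeightTruncation

section AlmostOrthogonality

variable {ι E F₁ F₂ F₃ : Type*} [NormedAddCommGroup E] [InnerProductSpace ℝ E]
  [FiniteDimensional ℝ E] [MeasurableSpace E] [BorelSpace E]
  [NormedAddCommGroup F₁] [NormedSpace ℂ F₁] [CompleteSpace F₁]
  [NormedAddCommGroup F₂] [InnerProductSpace ℂ F₂] [CompleteSpace F₂]
  [NormedAddCommGroup F₃] [InnerProductSpace ℂ F₃] [CompleteSpace F₃]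
  (L : F₁ →L[ℂ] F₂ →L[ℂ] F₃) {β : ι → E → F₁} {b : ℝ≥0∞}

theorem tsum_lintegral_convolution_sq_le (hβ : ∀ k, Integrable (β k))
    (hb : ∀ ξ, ∑' k, ‖𝓕 (β k) ξ‖ₑ ^ 2 ≤ b) {g : E → F₂} (hg : Integrable g) :
    ∑' k, ∫⁻ x, ‖(β k ⋆[L] g) x‖ₑ ^ 2 ≤ ‖L‖ₑ ^ 2 * b * ∫⁻ x, ‖g x‖ₑ ^ 2 := by
  have hconv (k : ι) : Integrable (β k ⋆[L] g) := (hβ k).integrable_convolution L hg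
  have hmeas (k : ι) : Measurable fun ξ ↦ ‖𝓕 (β k ⋆[L] g) ξ‖ₑ ^ 2 :=
    (continuous_fourier_of_integrable (hconv k)).enorm.measurable.pow_const 2
  have hmul (k : ι) (ξ : E) :
      ‖𝓕 (β k ⋆[L] g) ξ‖ₑ ^ 2 ≤ ‖L‖ₑ ^ 2 * ‖𝓕 (β k) ξ‖ₑ ^ 2 * ‖𝓕 g ξ‖ₑ ^ 2 := by
    rw [Real.fourier_bilin_convolution_eq L (hβ k) hg ξ, ← mul_pow, ← mul_pow]
    gcongr
    exact L.le_opENorm₂ _ _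
  calc ∑' k, ∫⁻ x, ‖(β k ⋆[L] g) x‖ₑ ^ 2
      = ∑' k, ∫⁻ ξ, ‖𝓕 (β k ⋆[L] g) ξ‖ₑ ^ 2 :=
        tsum_congr fun k ↦ (lintegral_enorm_fourier_sq (hconv k)).symm
    _ ≤ ∫⁻ ξ, ∑' k, ‖𝓕 (β k ⋆[L] g) ξ‖ₑ ^ 2 :=
        tsum_lintegral_le_lintegral_tsum fun k ↦ (hmeas k).aemeasurable
    _ ≤ ∫⁻ ξ, ‖L‖ₑ ^ 2 * b * ‖𝓕 g ξ‖ₑ ^ 2 := by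
        refine lintegral_mono fun ξ ↦ (ENNReal.tsum_le_tsum fun k ↦ hmul k ξ).trans ?_
        rw [ENNReal.tsum_mul_right, ENNReal.tsum_mul_left]
        gcongr
        exact hb ξ
    _ = ‖L‖ₑ ^ 2 * b * ∫⁻ x, ‖g x‖ₑ ^ 2 := by
        rw [lintegral_const_mul, lintegral_enorm_fourier_sq hg]
        exact (continuous_fourier_of_integrable hg).enorm.measurable.pow_const 2

theorem tsum_distribution_convolution_le (hβ : ∀ k, Integrable (β k))
    (hb : ∀ ξ, ∑' k, ‖𝓕 (β k) ξ‖ₑ ^ 2 ≤ b) {f : E → F₂} (hf : AEStronglyMeasurable f) {s τ : ℝ}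
    (hτ : 0 < τ) (hs : ∀ k, ‖L‖ * (∫ x, ‖β k x‖) * τ ≤ s)
    (hfin : ∫⁻ x in {x | τ < ‖f x‖}, ‖f x‖ₑ ^ 2 ≠ ∞) :
    ENNReal.ofReal s ^ 2 * ∑' k, distribution volume (β k ⋆[L] f) (s + s) ≤
      ‖L‖ₑ ^ 2 * b * ∫⁻ x in {x | τ < ‖f x‖}, ‖f x‖ₑ ^ 2 := by
  set S : Set E := {x | τ < ‖f x‖}
  have hS : NullMeasurableSet S volume := nullMeasurableSet_lt_norm hf τ
  set g : E → F₂ := S.indicator f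
  set l : E → F₂ := Sᶜ.indicator f
  have hlg : l + g = f := Set.indicator_compl_add_self S f
  have hg : Integrable g := by
    refine (integrableOn_lt_norm_of_memLp one_le_two ofNat_ne_top hτ
      ⟨hf.restrict, ?_⟩).integrable_indicator₀ hS
    rw [lintegral_enorm_sq_eq_eLpNorm_sq] at hfin
    exact lt_top_iff_ne_top.2 fun h ↦ hfin (by rw [h, ENNReal.top_pow two_ne_zero])
  have hg_sq : ∫⁻ x, ‖g x‖ₑ ^ 2 = ∫⁻ x in S, ‖f x‖ₑ ^ 2 := by
    rw [← lintegral_indicator₀ hS]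
    refine lintegral_congr fun x ↦ ?_
    by_cases hx : x ∈ S <;> simp [g, hx]
  have hlow (k : ι) : distribution volume (β k ⋆[L] f) (s + s) ≤
      distribution volume (β k ⋆[L] g) s := by
    rw [← hlg]
    exact distribution_convolution_add_le L (hβ k) (hf.indicator₀ hS.compl)
      (norm_indicator_compl_lt_norm_le f hτ.le) (hs k) hg
  calc ENNReal.ofReal s ^ 2 * ∑' k, distribution volume (β k ⋆[L] f) (s + s)
      ≤ ENNReal.ofReal s ^ 2 * ∑' k, distribution volume (β k ⋆[L] g) s := by
        gcongr with k
        exact hlow k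
    _ ≤ ∑' k, ∫⁻ x, ‖(β k ⋆[L] g) x‖ₑ ^ 2 := by
        rw [← ENNReal.tsum_mul_left]
        gcongr with k
        exact ofReal_pow_mul_distribution_le ((hβ k).integrable_convolution L hg).1 s 2
    _ ≤ ‖L‖ₑ ^ 2 * b * ∫⁻ x in S, ‖f x‖ₑ ^ 2 := by
        rw [← hg_sq]
        exact tsum_lintegral_convolution_sq_le L hβ hb hg

-- The summand `1` on the right is there for `b = 0`, where `0 * ∞ = 0` would lose the case of an
-- infinite integral.
theorem two_zpow_rpow_two_mul_tsum_distribution_convolution_le (hβ : ∀ k, Integrable (β k)) {A : ℝ}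
    (hA : ∀ k, ∫ x, ‖β k x‖ ≤ A) (hb : ∀ ξ, ∑' k, ‖𝓕 (β k) ξ‖ₑ ^ 2 ≤ b) {f : E → F₂}
    (hf : AEStronglyMeasurable f) {n : ℤ} (hn : 2 * ‖L‖ * A ≤ 2 ^ n) (m : ℤ) :
    ((2 : ℝ≥0∞) ^ m) ^ (2 : ℝ) * ∑' k, distribution volume (β k ⋆[L] f) (2 ^ m) ≤
      (4 * (‖L‖ₑ ^ 2 * b) + 1) * ∫⁻ x in {x | (2 : ℝ) ^ (m - n) < ‖f x‖}, ‖f x‖ₑ ^ (2 : ℝ) := by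
  simp only [ENNReal.rpow_two]
  by_cases hfin : ∫⁻ x in {x | (2 : ℝ) ^ (m - n) < ‖f x‖}, ‖f x‖ₑ ^ 2 = ∞
  · rw [hfin, ENNReal.mul_top (by simp)]
    exact le_top
  have hhalf : (2 : ℝ) ^ (m - 1) + 2 ^ (m - 1) = 2 ^ m := by
    rw [← two_mul, ← zpow_one_add₀ two_ne_zero, add_sub_cancel]
  have hheight (k : ι) : ‖L‖ * (∫ x, ‖β k x‖) * (2 : ℝ) ^ (m - n) ≤ 2 ^ (m - 1) := by
    calc ‖L‖ * (∫ x, ‖β k x‖) * (2 : ℝ) ^ (m - n) ≤ ‖L‖ * A * 2 ^ (m - n) := by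
          gcongr
          exact hA k
      _ = 2 * ‖L‖ * A * 2 ^ (m - n) / 2 := by ring
      _ ≤ 2 ^ n * 2 ^ (m - n) / 2 := by gcongr
      _ = 2 ^ (m - 1) := by rw [← zpow_add₀ two_ne_zero, add_sub_cancel, zpow_sub_one₀ two_ne_zero,
          div_eq_mul_inv]
  have hsq : ((2 : ℝ≥0∞) ^ m) ^ 2 = 4 * ENNReal.ofReal (2 ^ (m - 1)) ^ 2 := by
    rw [← ofReal_two_zpow, ← hhalf, ← two_mul, ENNReal.ofReal_mul zero_le_two, mul_pow]
    norm_num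
  calc ((2 : ℝ≥0∞) ^ m) ^ 2 * ∑' k, distribution volume (β k ⋆[L] f) (2 ^ m)
      = 4 * (ENNReal.ofReal (2 ^ (m - 1)) ^ 2 *
          ∑' k, distribution volume (β k ⋆[L] f) (2 ^ (m - 1) + 2 ^ (m - 1))) := by
        rw [hsq, hhalf, mul_assoc]
    _ ≤ 4 * (‖L‖ₑ ^ 2 * b * ∫⁻ x in {x | (2 : ℝ) ^ (m - n) < ‖f x‖}, ‖f x‖ₑ ^ 2) := by
        gcongr 4 * ?_
        exact tsum_distribution_convolution_le L hβ hb hf (by positivity) hheight hfin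
    _ ≤ (4 * (‖L‖ₑ ^ 2 * b) + 1) *
          ∫⁻ x in {x | (2 : ℝ) ^ (m - n) < ‖f x‖}, ‖f x‖ₑ ^ 2 := by
        rw [← mul_assoc]
        gcongr
        exact le_self_add

theorem statement1_general {p q : ℝ} (hp : 2 < p) (hq : 0 < q) (hqp : q ≤ p) (A B : ℝ) :
    ∃ C : ℝ, 0 < C ∧
      ∀ β : ι → E → F₁,
        (∀ k, Integrable (β k)) →
        (∀ k, ∫ x, ‖β k x‖ ≤ A) →
        (∀ ξ, ∑' k, ‖𝓕 (β k) ξ‖ₑ ^ 2 ≤ ENNReal.ofReal B ^ 2) →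
        ∀ f : E → F₂, AEStronglyMeasurable f →
          (∑' k, lorentzNorm volume p q (β k ⋆[L] f) ^ p) ^ (1 / p) ≤
            ENNReal.ofReal C * lorentzNorm volume p q f := by
  obtain ⟨n, hn⟩ : ∃ n : ℕ, 2 * ‖L‖ * A < 2 ^ n :=
    pow_unbounded_of_one_lt _ (_root_.one_lt_two (α := ℝ))
  have hs : 0 < q - 2 * (q / p) := by
    have : q - 2 * (q / p) = q * (p - 2) / p := by field_simp
    rw [this]
    exact div_pos (mul_pos hq (sub_pos.2 hp)) (two_pos.trans hp)
  set D : ℝ≥0∞ := 4 * (‖L‖ₑ ^ 2 * ENNReal.ofReal B ^ 2) + 1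
  set K : ℝ≥0∞ := ((D * 2 ^ (2 : ℝ)) ^ (q / p) * dyadicTailConst n (q - 2 * (q / p))) ^ (1 / q)
  have hK : K ≠ ∞ := by
    have hD : D ≠ ∞ := by finiteness
    have hqp0 : 0 ≤ q / p := div_nonneg hq.le (hq.le.trans hqp)
    have := dyadicTailConst_ne_top n hs
    finiteness
  refine ⟨K.toReal + 1, by positivity, fun β hβ hA hB f hf ↦ ?_⟩
  calc (∑' k, lorentzNorm volume p q (β k ⋆[L] f) ^ p) ^ (1 / p)
      ≤ K * lorentzNorm volume p q f :=
        tsum_lorentzNorm_rpow_le_of_distribution_le hq hqp zero_le_two hf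
          (two_zpow_rpow_two_mul_tsum_distribution_convolution_le L hβ hA hB hf
            (by exact_mod_cast hn.le))
    _ ≤ ENNReal.ofReal (K.toReal + 1) * lorentzNorm volume p q f := by
        gcongr
        exact (ENNReal.ofReal_toReal hK).symm.trans_le
          (ENNReal.ofReal_le_ofReal (le_add_of_nonneg_right zero_le_one))

end AlmostOrthogonality

/-- Dual almost orthogonality: if `sup_k ‖β_k‖_{L¹} ≤ A` and `sup_ξ Σ_k |β̂_k(ξ)| ≤ B`,
then `(Σ_k ‖β_k * f‖_{L^{p,q}}^p)^{1/p} ≤ C ‖f‖_{L^{p,q}}` for `2 < p < ∞`, `1 ≤ q ≤ p`. -/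
theorem statement1 (d : ℕ) (hd : 1 ≤ d) (p q : ℝ) (hp1 : 2 < p) (hq1 : 1 ≤ q)
    (hqp : q ≤ p) (A B : ℝ) :
    ∃ C : ℝ, 0 < C ∧
      ∀ (β : ℤ → EuclideanSpace ℝ (Fin d) → ℂ),
        (∀ k, Integrable (β k)) →
        (∀ k, (∫ x, ‖β k x‖) ≤ A) →
        (∀ ξ, (∑' k : ℤ, (‖𝓕 (β k) ξ‖₊ : ℝ≥0∞)) ≤ ENNReal.ofReal B) →
        ∀ f : EuclideanSpace ℝ (Fin d) → ℂ, Measurable f →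
          (∑' k : ℤ,
              (lorentzNorm volume p q (β k ⋆[ContinuousLinearMap.mul ℂ ℂ] f)) ^ p) ^ (1 / p) ≤
            ENNReal.ofReal C * lorentzNorm volume p q f := by
  obtain ⟨C, hC, h⟩ := statement1_general (ι := ℤ) (E := EuclideanSpace ℝ (Fin d))
    (ContinuousLinearMap.mul ℂ ℂ) hp1 (zero_lt_one.trans_le hq1) hqp A B
  exact ⟨C, hC, fun β hβ hA hB f hf ↦ h β hβ hA
    (fun ξ ↦ (tsum_sq_le_sq_tsum _).trans (pow_le_pow_left' (hB ξ) 2)) f hf.aestronglyMeasurable⟩
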